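/- Ultraspherical interpolation inequality, supercritical range: let d ≥ 1 and let p satisfy 2 < p ≤ 2d/(d−2) if d ≥ 3, or 2 < p < ∞ if d = 1 or d = 2. Then for every continuously differentiable function f on [−1,1], ∫_{−1}^{1} |f'(x)|² ν(x) dν_d(x) ≥ d ( ‖f‖_p² − ‖f‖_2² ) / (p − 2), where ‖f‖_q = ( ∫_{−1}^{1} |f|^q dν_d )^{1/q}. -/

import Mathlib

open MeasureTheory Real

noncomputable section

/-- The normalization constant `Z_d = √π Γ(d/2)/Γ((d+1)/2)`. -/
def Zd (d : ℕ) : ℝ := Real.sqrt π * Real.Gamma ((d : ℝ) / 2) / Real.Gamma (((d : ℝ) + 1) / 2)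

/-- The probability measure `dν_d(x) = Z_d⁻¹ (1 − x²)^{d/2−1} dx` on `(−1,1)`. -/
def nuMeas (d : ℕ) : Measure ℝ :=
  (volume.restrict (Set.Ioo (-1 : ℝ) 1)).withDensity
    fun x => ENNReal.ofReal ((1 - x ^ 2) ^ ((d : ℝ) / 2 - 1) / Zd d)

open Set Filter Topology in
lemma us_ascoli (A B C M : ℝ) (hAB : A ≤ B) (f : ℕ → ℝ → ℝ)
    (hC : ∀ n, ∀ x ∈ Icc A B, ∀ y ∈ Icc A B, |f n x - f n y| ≤ C * √|x - y|)
    (hM : ∀ n, ∀ x ∈ Icc A B, |f n x| ≤ M) :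
    ∃ φ : ℕ → ℕ, StrictMono φ ∧ ∃ F : ℝ → ℝ, Continuous F ∧
      TendstoUniformlyOn (fun n => f (φ n)) F atTop (Icc A B) := by
  have hlim : ∀ x : Icc A B, Tendsto (fun y : Icc A B => C * √|(x:ℝ) - y|) (𝓝 x) (𝓝 0) := by
    intro x
    have : Continuous (fun y : Icc A B => C * √|(x:ℝ) - y|) := by fun_prop
    simpa using this.tendsto x
  have hcont : ∀ n, Continuous (fun x : Icc A B => f n x) := by
    intro n
    rw [continuous_iff_continuousAt]
    intro x
    rw [ContinuousAt, tendsto_iff_dist_tendsto_zero]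
    refine squeeze_zero (fun _ => dist_nonneg) (fun y => ?_) (hlim x)
    rw [dist_comm, Real.dist_eq]
    exact hC n x x.2 y y.2
  let g : ℕ → BoundedContinuousFunction (Icc A B) ℝ := fun n =>
    BoundedContinuousFunction.mkOfCompact ⟨_, hcont n⟩
  have hg : ∀ n x, g n x = f n x := fun n x => rfl
  have hK : IsCompact (closure (range g)) := by
    apply BoundedContinuousFunction.arzela_ascoli (Metric.closedBall 0 M)
      (isCompact_closedBall _ _)
    · rintro _ x ⟨n, rfl⟩
      rw [hg, mem_closedBall_zero_iff]
      exact hM n x x.2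
    · intro x
      apply Metric.equicontinuousAt_of_continuity_modulus _ (hlim x)
      refine Eventually.of_forall ?_
      rintro y ⟨_, n, rfl⟩
      rw [Real.dist_eq]
      exact hC n x x.2 y y.2
  obtain ⟨F, -, φ, hφ, hF⟩ := hK.tendsto_subseq (x := g) (fun n => subset_closure ⟨n, rfl⟩)
  refine ⟨φ, hφ, IccExtend hAB F, F.continuous.Icc_extend', ?_⟩
  rw [BoundedContinuousFunction.tendsto_iff_tendstoUniformly, Metric.tendstoUniformly_iff] at hF
  rw [Metric.tendstoUniformlyOn_iff]
  intro ε hε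
  filter_upwards [hF ε hε] with n hn x hx
  have := hn ⟨x, hx⟩
  rw [IccExtend_of_mem _ _ hx]
  exact this

open Set in
lemma us_holder (A B r E : ℝ) (ρ f : ℝ → ℝ) (hr : 0 < r) (hρc : Continuous ρ)
    (hρ : ∀ x ∈ Icc A B, r ≤ ρ x) (hf : ContDiff ℝ 1 f)
    (hE : ∫ x in A..B, ρ x * (deriv f x)^2 ≤ E) :
    ∀ x ∈ Icc A B, ∀ y ∈ Icc A B, |f x - f y| ≤ ((E / r + 1) / 2) * √|x - y| := by
  have hdc : Continuous (deriv f) := hf.continuous_deriv le_rfl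
  have main : ∀ x ∈ Icc A B, ∀ y ∈ Icc A B, x < y → |f y - f x| ≤ ((E / r + 1) / 2) * √(y - x) := by
    intro x hx y hy hxy
    have h1 : ∫ t in x..y, deriv f t = f y - f x :=
      intervalIntegral.integral_deriv_eq_sub (fun t _ => (hf.differentiable one_ne_zero) t)
        (hdc.intervalIntegrable _ _)
    have hE2 : ∫ t in x..y, (deriv f t)^2 ≤ E / r := by
      rw [le_div_iff₀ hr, mul_comm]
      calc r * ∫ t in x..y, (deriv f t)^2 = ∫ t in x..y, r * (deriv f t)^2 := by
            rw [intervalIntegral.integral_const_mul]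
        _ ≤ ∫ t in x..y, ρ t * (deriv f t)^2 := by
            apply intervalIntegral.integral_mono_on hxy.le
            · exact (by fun_prop : Continuous _).intervalIntegrable _ _
            · exact (by fun_prop : Continuous _).intervalIntegrable _ _
            · intro t ht
              exact mul_le_mul_of_nonneg_right (hρ t ⟨hx.1.trans ht.1, ht.2.trans hy.2⟩)
                (sq_nonneg _)
        _ ≤ ∫ t in A..B, ρ t * (deriv f t)^2 := by
            apply intervalIntegral.integral_mono_interval hx.1 hxy.le hy.2
            · rw [Filter.EventuallyLE, ae_restrict_iff' measurableSet_Ioc]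
              refine Filter.Eventually.of_forall fun t ht => ?_
              exact mul_nonneg (hr.le.trans (hρ t ⟨ht.1.le, ht.2⟩)) (sq_nonneg _)
            · exact (by fun_prop : Continuous _).intervalIntegrable _ _
        _ ≤ E := hE
    have hs : 0 < √(y - x) := Real.sqrt_pos.2 (by linarith)
    have hss : √(y - x) * √(y - x) = y - x := Real.mul_self_sqrt (by linarith)
    generalize √(y - x) = s at *
    rw [← h1]
    calc |∫ t in x..y, deriv f t| ≤ ∫ t in x..y, |deriv f t| :=
          intervalIntegral.abs_integral_le_integral_abs hxy.le
      _ ≤ ∫ t in x..y, (s / 2 * (deriv f t)^2 + 1 / (2 * s)) := by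
          apply intervalIntegral.integral_mono_on hxy.le
          · exact (by fun_prop : Continuous _).intervalIntegrable _ _
          · exact (by fun_prop : Continuous _).intervalIntegrable _ _
          · intro t ht
            have : s / 2 * (deriv f t)^2 + 1 / (2 * s) - |deriv f t|
                = (s * |deriv f t| - 1)^2 / (2 * s) := by
              rw [← sq_abs (deriv f t)]; field_simp; ring
            have h0 : 0 ≤ (s * |deriv f t| - 1)^2 / (2 * s) := by positivity
            linarith
      _ = s / 2 * (∫ t in x..y, (deriv f t)^2) + s / 2 := by
          rw [intervalIntegral.integral_add, intervalIntegral.integral_const_mul]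
          · simp only [intervalIntegral.integral_const, smul_eq_mul]
            rw [← hss]; field_simp
          · exact (by fun_prop : Continuous _).intervalIntegrable _ _
          · exact (by fun_prop : Continuous _).intervalIntegrable _ _
      _ ≤ (E / r + 1) / 2 * s := by nlinarith
  intro x hx y hy
  rcases lt_trichotomy x y with h | h | h
  · rw [abs_sub_comm, abs_sub_comm x y, abs_of_pos (by linarith : 0 < y - x)]
    exact main x hx y hy h
  · subst h; simp
  · rw [abs_of_pos (by linarith : 0 < x - y)]
    exact main y hy x hx h
def usQ (ρ w : ℝ → ℝ) (l A B : ℝ) (f : ℝ → ℝ) : ℝ :=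
  (∫ x in A..B, ρ x * (deriv f x)^2) + l * ∫ x in A..B, (f x)^2 * w x

def usN (w : ℝ → ℝ) (p A B : ℝ) (f : ℝ → ℝ) : ℝ := ∫ x in A..B, |f x|^p * w x

open Set Filter Topology in
lemma us_conv (A B M : ℝ) (hAB : A ≤ B) (Ψ : ℝ → ℝ → ℝ) (hΨ : Continuous (fun z : ℝ × ℝ => Ψ z.1 z.2))
    (f : ℕ → ℝ → ℝ) (F : ℝ → ℝ) (hf : ∀ n, Continuous (f n))
    (hM : ∀ n, ∀ x ∈ Icc A B, |f n x| ≤ M)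
    (hlim : ∀ x ∈ Icc A B, Tendsto (fun n => f n x) atTop (𝓝 (F x))) :
    Tendsto (fun n => ∫ x in A..B, Ψ x (f n x)) atTop (𝓝 (∫ x in A..B, Ψ x (F x))) := by
  obtain ⟨K, hK⟩ := (isCompact_Icc (a := A) (b := B)).prod (isCompact_Icc (a := -M) (b := M))
    |>.exists_bound_of_continuousOn hΨ.continuousOn
  apply intervalIntegral.tendsto_integral_filter_of_dominated_convergence (fun _ => K)
  · refine Eventually.of_forall fun n => ?_
    have := hf n
    exact (hΨ.comp (by fun_prop : Continuous fun x => (x, f n x))).aestronglyMeasurable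
  · refine Eventually.of_forall fun n => Eventually.of_forall fun x hx => ?_
    rw [uIoc_of_le hAB] at hx
    have hx' := Ioc_subset_Icc_self hx
    exact hK (x, f n x) ⟨hx', abs_le.1 (hM n x hx')⟩
  · exact intervalIntegrable_const
  · refine Eventually.of_forall fun x hx => ?_
    rw [uIoc_of_le hAB] at hx
    have hx' := Ioc_subset_Icc_self hx
    exact (hΨ.tendsto (x, F x)).comp (tendsto_const_nhds.prodMk_nhds (hlim x hx'))

open Set Filter Topology in
lemma us_minseq (A B p l : ℝ) (hAB : A < B) (hp : 2 < p) (hl : 0 < l) (ρ w : ℝ → ℝ)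
    (hρc : Continuous ρ) (hwc : Continuous w) (hρ : ∀ x, 0 < ρ x) (hw : ∀ x, 0 < w x) :
    ∃ I : ℝ, 0 ≤ I ∧ (∀ f, ContDiff ℝ 1 f → I * usN w p A B f ^ (2 / p) ≤ usQ ρ w l A B f) ∧
    ∃ f : ℕ → ℝ → ℝ, (∀ n, ContDiff ℝ 1 (f n)) ∧ (∀ n x, 0 ≤ f n x) ∧
      (∀ n, 1 ≤ usN w p A B (f n)) ∧
      Tendsto (fun n => usQ ρ w l A B (f n)) atTop (𝓝 I) := by
  have hQ0 : ∀ f, 0 ≤ usQ ρ w l A B f := by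
    intro f
    apply add_nonneg
    · exact intervalIntegral.integral_nonneg hAB.le fun x _ => mul_nonneg (hρ x).le (sq_nonneg _)
    · exact mul_nonneg hl.le (intervalIntegral.integral_nonneg hAB.le
        fun x _ => mul_nonneg (sq_nonneg _) (hw x).le)
  have hN0 : ∀ f, 0 ≤ usN w p A B f := fun f =>
    intervalIntegral.integral_nonneg hAB.le fun x _ => mul_nonneg (by positivity) (hw x).le
  have hNsc : ∀ f (t : ℝ), 0 ≤ t → usN w p A B (fun x => t * f x) = t ^ p * usN w p A B f := by
    intro f t ht
    unfold usN
    rw [← intervalIntegral.integral_const_mul]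
    congr 1; ext x
    rw [abs_mul, abs_of_nonneg ht, mul_rpow ht (abs_nonneg _)]; ring
  have hQsc : ∀ f (t : ℝ), usQ ρ w l A B (fun x => t * f x) = t ^ 2 * usQ ρ w l A B f := by
    intro f t
    unfold usQ
    have : ∀ x, ρ x * deriv (fun x => t * f x) x ^ 2 = t^2 * (ρ x * deriv f x ^ 2) := by
      intro x; rw [deriv_const_mul_field]; ring
    simp_rw [this]
    have : ∀ x, (t * f x)^2 * w x = t^2 * (f x ^ 2 * w x) := by intro x; ring
    simp_rw [this]
    rw [intervalIntegral.integral_const_mul, intervalIntegral.integral_const_mul]; ring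
  let S : Set ℝ := {y | ∃ f, ContDiff ℝ 1 f ∧ 1 ≤ usN w p A B f ∧ usQ ρ w l A B f = y}
  have hbdd : BddBelow S := ⟨0, by rintro _ ⟨f, -, -, rfl⟩; exact hQ0 f⟩
  have norm1 : ∀ f, ContDiff ℝ 1 f → 0 < usN w p A B f →
      ∃ t : ℝ, 0 < t ∧ t ^ 2 = (usN w p A B f ^ (2/p))⁻¹ ∧ usN w p A B (fun x => t * f x) = 1 := by
    intro f hf hpos
    refine ⟨usN w p A B f ^ (-(1/p)), by positivity, ?_, ?_⟩
    · rw [← rpow_natCast, ← rpow_mul hpos.le, ← rpow_neg hpos.le]; congr 1; push_cast; ring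
    · rw [hNsc _ _ (by positivity), ← rpow_mul hpos.le]
      have : -(1/p) * p = -1 := by field_simp
      rw [this, rpow_neg_one]; field_simp
  have hne : S.Nonempty := by
    have h1 : 0 < usN w p A B (fun _ => 1) := by
      unfold usN
      apply intervalIntegral.intervalIntegral_pos_of_pos _ _ hAB
      · simp only [abs_one, one_rpow, one_mul]
        exact hwc.intervalIntegrable _ _
      · intro x; simpa using hw x
    obtain ⟨t, -, -, ht⟩ := norm1 _ contDiff_const h1
    exact ⟨_, _, contDiff_const, ht.ge, rfl⟩
  refine ⟨sInf S, le_csInf hne (by rintro _ ⟨f, -, -, rfl⟩; exact hQ0 f), ?_, ?_⟩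
  · intro f hf
    rcases (hN0 f).eq_or_lt with h | h
    · rw [← h, zero_rpow (by positivity), mul_zero]; exact hQ0 f
    · obtain ⟨t, ht, ht2, htN⟩ := norm1 f hf h
      have h1 : sInf S ≤ usQ ρ w l A B (fun x => t * f x) :=
        csInf_le hbdd ⟨_, contDiff_const.mul hf, htN.ge, rfl⟩
      rw [hQsc, ht2] at h1
      have h2 : 0 < usN w p A B f ^ (2/p) := by positivity
      calc _ ≤ _ := mul_le_mul_of_nonneg_right h1 h2.le
        _ = _ := by field_simp
  · have key : ∀ n : ℕ, ∃ g : ℝ → ℝ, ContDiff ℝ 1 g ∧ (∀ x, 0 ≤ g x) ∧ 1 ≤ usN w p A B g ∧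
        usQ ρ w l A B g ≤ sInf S + (1 + l * ∫ x in A..B, w x) * (1 / ((n:ℝ) + 1)) := by
      intro n
      have hε : (0:ℝ) < 1 / ((n:ℝ) + 1) := by positivity
      obtain ⟨_, ⟨f, hf, hfN, rfl⟩, hlt⟩ := exists_lt_of_csInf_lt hne
        (lt_add_of_pos_right (sInf S) hε)
      generalize 1 / ((n:ℝ) + 1) = ε at *
      have hpos : ∀ x, 0 < f x ^ 2 + ε := fun x => by positivity
      have hdc : Continuous (deriv f) := hf.continuous_deriv le_rfl
      have hfc := hf.continuous
      have hg : ContDiff ℝ 1 (fun x => √(f x ^ 2 + ε)) :=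
        ContDiff.sqrt ((hf.pow 2).add contDiff_const) (fun x => (hpos x).ne')
      have hgdc := hg.continuous_deriv le_rfl
      refine ⟨fun x => √(f x ^ 2 + ε), hg, fun x => Real.sqrt_nonneg _, hfN.trans ?_, ?_⟩
      · apply intervalIntegral.integral_mono_on hAB.le
        · exact ((hfc.abs.rpow_const (fun _ => Or.inr (by linarith))).mul hwc).intervalIntegrable _ _
        · exact ((hg.continuous.abs.rpow_const
            (fun _ => Or.inr (by linarith))).mul hwc).intervalIntegrable _ _
        · intro x _
          apply mul_le_mul_of_nonneg_right _ (hw x).le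
          apply rpow_le_rpow (abs_nonneg _) _ (by linarith)
          rw [abs_of_nonneg (Real.sqrt_nonneg _)]
          apply Real.le_sqrt_of_sq_le
          rw [sq_abs]; linarith
      · have h1 : ∫ x in A..B, ρ x * deriv (fun x => √(f x ^ 2 + ε)) x ^ 2 ≤
            ∫ x in A..B, ρ x * deriv f x ^ 2 := by
          apply intervalIntegral.integral_mono_on hAB.le
          · exact (hρc.mul (hgdc.pow 2)).intervalIntegrable _ _
          · exact (hρc.mul (hdc.pow 2)).intervalIntegrable _ _
          · intro x _
            apply mul_le_mul_of_nonneg_left _ (hρ x).le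
            have hd1 : HasDerivAt f (deriv f x) x := (hf.differentiable one_ne_zero x).hasDerivAt
            have hd2 := ((hd1.pow 2).add_const ε).sqrt (hpos x).ne'
            have hd3 : deriv (fun x => √(f x ^ 2 + ε)) x = _ := hd2.deriv
            rw [hd3, div_pow, mul_pow, Pi.pow_apply, mul_pow 2 (√_), Real.sq_sqrt (hpos x).le, div_le_iff₀ (by positivity)]
            simp
            nlinarith [mul_nonneg hε.le (sq_nonneg (deriv f x))]
        have h2 : ∫ x in A..B, √(f x ^ 2 + ε) ^ 2 * w x =
            (∫ x in A..B, f x ^ 2 * w x) + ε * ∫ x in A..B, w x := by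
          rw [← intervalIntegral.integral_const_mul, ← intervalIntegral.integral_add]
          · congr 1; ext x; rw [Real.sq_sqrt (hpos x).le]; ring
          · exact ((hfc.pow 2).mul hwc).intervalIntegrable _ _
          · exact (hwc.const_mul ε).intervalIntegrable _ _
        unfold usQ at hlt ⊢
        rw [h2]
        nlinarith
    choose g hg1 hg2 hg3 hg4 using key
    refine ⟨g, hg1, hg2, hg3, ?_⟩
    refine tendsto_of_tendsto_of_tendsto_of_le_of_le tendsto_const_nhds ?_
      (fun n => csInf_le hbdd ⟨g n, hg1 n, hg3 n, rfl⟩) hg4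
    have := (tendsto_one_div_add_atTop_nhds_zero_nat (𝕜 := ℝ)).const_mul (1 + l * ∫ x in A..B, w x)
    simpa using this.const_add (sInf S)

open Set Filter Topology in
lemma us_minlim (A B p l : ℝ) (hAB : A < B) (hp : 2 < p) (hl : 0 < l) (ρ w : ℝ → ℝ)
    (hρc : Continuous ρ) (hwc : Continuous w) (hρ : ∀ x, 0 < ρ x) (hw : ∀ x, 0 < w x) :
    ∃ I : ℝ, 0 ≤ I ∧ (∀ f, ContDiff ℝ 1 f → I * usN w p A B f ^ (2 / p) ≤ usQ ρ w l A B f) ∧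
    ∃ f : ℕ → ℝ → ℝ, (∀ n, ContDiff ℝ 1 (f n)) ∧ (∀ n x, 0 ≤ f n x) ∧
      (∀ n, 1 ≤ usN w p A B (f n)) ∧
      Tendsto (fun n => usQ ρ w l A B (f n)) atTop (𝓝 I) ∧
      ∃ M, (∀ n, ∀ x ∈ Icc A B, |f n x| ≤ M) ∧ ∃ F, Continuous F ∧
      ∀ x ∈ Icc A B, Tendsto (fun n => f n x) atTop (𝓝 (F x)) := by
  obtain ⟨I, hI, hIQ, f, hf1, hf2, hf3, hf4⟩ := us_minseq A B p l hAB hp hl ρ w hρc hwc hρ hw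
  refine ⟨I, hI, hIQ, ?_⟩
  obtain ⟨E, hE⟩ := hf4.bddAbove_range
  have hE' : ∀ n, usQ ρ w l A B (f n) ≤ E := fun n => hE ⟨n, rfl⟩
  obtain ⟨x0, hx0, hmin⟩ := (isCompact_Icc (a := A) (b := B)).exists_isMinOn
    ⟨A, left_mem_Icc.2 hAB.le⟩ hρc.continuousOn
  have hr : ∀ x ∈ Icc A B, ρ x0 ≤ ρ x := fun x hx => hmin hx
  have hEa : ∀ n, ∫ x in A..B, ρ x * (deriv (f n) x)^2 ≤ E := by
    intro n
    refine le_trans ?_ (hE' n)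
    exact le_add_of_nonneg_right (mul_nonneg hl.le (intervalIntegral.integral_nonneg hAB.le
        fun x _ => mul_nonneg (sq_nonneg _) (hw x).le))
  have hEb : ∀ n, l * ∫ x in A..B, (f n x)^2 * w x ≤ E := by
    intro n
    refine le_trans ?_ (hE' n)
    exact le_add_of_nonneg_left (intervalIntegral.integral_nonneg hAB.le
      fun x _ => mul_nonneg (hρ x).le (sq_nonneg _))
  have hhol := fun n => us_holder A B (ρ x0) E ρ (f n) (hρ x0) hρc hr (hf1 n) (hEa n)
  set C := (E / ρ x0 + 1) / 2 with hCdef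
  have hE0 : 0 ≤ E := le_trans (mul_nonneg hl.le (intervalIntegral.integral_nonneg hAB.le
        fun x _ => mul_nonneg (sq_nonneg _) (hw x).le)) (hEb 0)
  have hC0 : 0 ≤ C := by have := hρ x0; positivity
  set m := ∫ x in A..B, w x with hm
  have hmpos : 0 < m := intervalIntegral.intervalIntegral_pos_of_pos
    (hwc.intervalIntegrable _ _) hw hAB
  obtain ⟨D, hD⟩ : ∃ D, D = C * √(B - A) := ⟨_, rfl⟩
  have hbd : ∀ n, ∀ x ∈ Icc A B, |f n x| ≤ √((2 * (E / l) + 2 * D^2 * m) / m) := by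
    intro n x hx
    apply Real.le_sqrt_of_sq_le
    rw [sq_abs, le_div_iff₀ hmpos]
    have hfc := (hf1 n).continuous
    calc f n x ^ 2 * m = ∫ y in A..B, f n x ^ 2 * w y := by
          rw [intervalIntegral.integral_const_mul]
      _ ≤ ∫ y in A..B, (2 * (f n y ^ 2 * w y) + 2 * D^2 * w y) := by
          apply intervalIntegral.integral_mono_on hAB.le
          · exact (by fun_prop : Continuous _).intervalIntegrable _ _
          · exact (by fun_prop : Continuous _).intervalIntegrable _ _
          · intro y hy
            have h1 : |f n x - f n y| ≤ D := by
              refine (hhol n x hx y hy).trans ?_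
              rw [hD]
              apply mul_le_mul_of_nonneg_left _ hC0
              apply Real.sqrt_le_sqrt
              rw [abs_le]; constructor <;> linarith [hx.1, hx.2, hy.1, hy.2]
            have h2 : (f n x - f n y)^2 ≤ D^2 := by
              rw [← sq_abs]; exact pow_le_pow_left₀ (abs_nonneg _) h1 2
            have h3 : f n x ^ 2 ≤ 2 * f n y ^ 2 + 2 * D^2 := by nlinarith [sq_nonneg (f n x - 2 * f n y)]
            nlinarith [mul_le_mul_of_nonneg_right h3 (hw y).le]
      _ = 2 * (∫ y in A..B, f n y ^ 2 * w y) + 2 * D^2 * m := by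
          rw [intervalIntegral.integral_add, intervalIntegral.integral_const_mul,
            intervalIntegral.integral_const_mul]
          · exact (by fun_prop : Continuous _).intervalIntegrable _ _
          · exact (by fun_prop : Continuous _).intervalIntegrable _ _
      _ ≤ _ := by
          have : (∫ y in A..B, f n y ^ 2 * w y) ≤ E / l := by
            rw [le_div_iff₀ hl, mul_comm]; exact hEb n
          linarith
  obtain ⟨φ, hφ, F, hFc, hF⟩ := us_ascoli A B C _ hAB.le f hhol hbd
  exact ⟨fun n => f (φ n), fun n => hf1 _, fun n => hf2 _, fun n => hf3 _,
    hf4.comp hφ.tendsto_atTop, _, fun n => hbd _, F, hFc, fun x hx => hF.tendsto_at hx⟩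
lemma us_tangent (p F h : ℝ) (hp : 1 < p) (hF : 0 ≤ F) :
    F ^ p + p * F ^ (p - 1) * h ≤ |F + h| ^ p := by
  rcases hF.eq_or_lt with h0 | h0
  · subst h0
    rw [zero_rpow (by linarith), zero_rpow (by linarith)]
    simp; positivity
  · have hFp : F ^ p = F ^ (p - 1) * F := by
      rw [rpow_sub_one h0.ne']; field_simp
    rcases le_total 0 (F + h) with h1 | h1
    · rw [abs_of_nonneg h1]
      have := one_add_mul_self_le_rpow_one_add (s := h / F) (p := p)
        (by rw [le_div_iff₀ h0]; linarith) hp.le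
      have e : F + h = F * (1 + h / F) := by field_simp
      rw [e, mul_rpow hF (by have : 0 ≤ (F + h) / F := by positivity
                             rw [add_div, div_self h0.ne'] at this; exact this)]
      calc F ^ p + p * F ^ (p - 1) * h = F ^ p * (1 + p * (h / F)) := by
            rw [hFp]; field_simp
        _ ≤ _ := mul_le_mul_of_nonneg_left this (by positivity)
    · have h2 : 0 ≤ |F + h| ^ p := by positivity
      have h3 : 0 < F ^ (p - 1) := by positivity
      rw [hFp]
      have : F ^ (p-1) * (F + p * h) ≤ 0 := by
        apply mul_nonpos_of_nonneg_of_nonpos h3.le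
        nlinarith
      nlinarith

lemma us_onevar (I N S p l q : ℝ) (hN : 0 < N) (hp : 2 < p)
    (h : ∀ t : ℝ, 0 ≤ N + t * (p * S) →
      I * (N + t * (p * S)) ^ (2 / p) ≤ I * N ^ (2/p) + 2 * t * l + t ^ 2 * q) :
    l = I * N ^ (2 / p - 1) * S := by
  have hd : HasDerivAt (fun t : ℝ => I * N ^ (2/p) + 2 * t * l + t ^ 2 * q
      - I * (N + t * (p * S)) ^ (2 / p))
      (2 * l - I * (2 * N ^ (2/p - 1) * S)) 0 := by
    have e1 : HasDerivAt (fun t : ℝ => N + t * (p * S)) (p * S) 0 := by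
      simpa using ((hasDerivAt_id (0:ℝ)).mul_const (p * S)).const_add N
    have e2 := (e1.rpow_const (p := 2/p) (Or.inl (by simpa using hN.ne'))).const_mul I
    have e3 : HasDerivAt (fun t : ℝ => I * N ^ (2/p) + 2 * t * l + t ^ 2 * q) (2 * l) 0 := by
      have := ((((hasDerivAt_id (0:ℝ)).const_mul 2).mul_const l).const_add (I * N ^ (2/p))).add
        (((hasDerivAt_id (0:ℝ)).pow 2).mul_const q)
      refine HasDerivAt.congr_deriv this ?_
      simp
    refine (e3.sub e2).congr_deriv ?_
    simp
    left
    field_simp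
  have hmin : IsLocalMin (fun t : ℝ => I * N ^ (2/p) + 2 * t * l + t ^ 2 * q
      - I * (N + t * (p * S)) ^ (2 / p)) 0 := by
    have hc : Continuous (fun t : ℝ => N + t * (p * S)) := by fun_prop
    have : ∀ᶠ t in nhds (0:ℝ), 0 < N + t * (p * S) :=
      hc.continuousAt.eventually (lt_mem_nhds (by simpa using hN))
    filter_upwards [this] with t ht
    have := h t ht.le
    simp
    linarith
  have := hmin.hasDerivAt_eq_zero hd
  linarith

open Set Filter Topology in
lemma us_EL (A B p l I M : ℝ) (hAB : A < B) (hp : 2 < p) (ρ w : ℝ → ℝ)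
    (hρc : Continuous ρ) (hwc : Continuous w) (hρ : ∀ x, 0 < ρ x) (hw : ∀ x, 0 < w x)
    (hI : 0 ≤ I) (hIQ : ∀ f, ContDiff ℝ 1 f → I * usN w p A B f ^ (2 / p) ≤ usQ ρ w l A B f)
    (f : ℕ → ℝ → ℝ) (hf1 : ∀ n, ContDiff ℝ 1 (f n)) (hf2 : ∀ n x, 0 ≤ f n x)
    (hf3 : ∀ n, 1 ≤ usN w p A B (f n))
    (hf4 : Tendsto (fun n => usQ ρ w l A B (f n)) atTop (𝓝 I))
    (hM : ∀ n, ∀ x ∈ Icc A B, |f n x| ≤ M) (F : ℝ → ℝ) (hFc : Continuous F)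
    (hF : ∀ x ∈ Icc A B, Tendsto (fun n => f n x) atTop (𝓝 (F x)))
    (φ ψ ψ' : ℝ → ℝ) (hφ : ∀ x, HasDerivAt φ (ψ x / ρ x) x) (hψ : ∀ x, HasDerivAt ψ (ψ' x) x)
    (hψ'c : Continuous ψ') (hψA : ψ A = 0) (hψB : ψ B = 0) :
    -(∫ x in A..B, F x * ψ' x) + l * (∫ x in A..B, F x * φ x * w x)
      = I * usN w p A B F ^ (2 / p - 1) * ∫ x in A..B, F x ^ (p - 1) * φ x * w x := by
  have hψc : Continuous ψ := continuous_iff_continuousAt.2 fun x => (hψ x).continuousAt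
  have hφc : Continuous φ := continuous_iff_continuousAt.2 fun x => (hφ x).continuousAt
  have hdφ : deriv φ = fun x => ψ x / ρ x := funext fun x => (hφ x).deriv
  have hφ1 : ContDiff ℝ 1 φ := by
    rw [contDiff_one_iff_deriv]
    refine ⟨fun x => (hφ x).differentiableAt, ?_⟩
    rw [hdφ]; exact hψc.div hρc fun x => (hρ x).ne'
  have hF0 : ∀ x ∈ Icc A B, 0 ≤ F x := fun x hx =>
    ge_of_tendsto' (hF x hx) fun n => hf2 n x
  have hfc := fun n => (hf1 n).continuous
  have hrc : Continuous fun y : ℝ => |y| ^ p :=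
    continuous_abs.rpow_const (fun _ => Or.inr (by linarith))
  have hNlim : ∀ t : ℝ, Tendsto (fun n => usN w p A B (fun x => f n x + t * φ x)) atTop
      (𝓝 (usN w p A B (fun x => F x + t * φ x))) := by
    intro t
    refine us_conv A B M hAB.le (fun x y => |y + t * φ x| ^ p * w x) ?_ f F hfc hM hF
    exact (hrc.comp (by fun_prop : Continuous fun z : ℝ × ℝ => z.2 + t * φ z.1)).mul
      (by fun_prop)
  have hQexp : ∀ n (t : ℝ), usQ ρ w l A B (fun x => f n x + t * φ x) = usQ ρ w l A B (f n)
      + 2 * t * (-(∫ x in A..B, f n x * ψ' x) + l * (∫ x in A..B, f n x * φ x * w x))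
      + t ^ 2 * usQ ρ w l A B φ := by
    intro n t
    have hdfc := (hf1 n).continuous_deriv le_rfl
    have hdφc := hφ1.continuous_deriv le_rfl
    have hfn := hfc n
    have hdfn : ∀ x, HasDerivAt (f n) (deriv (f n) x) x := fun x =>
      ((hf1 n).differentiable one_ne_zero x).hasDerivAt
    have hibp : ∫ x in A..B, f n x * ψ' x = - ∫ x in A..B, deriv (f n) x * ψ x := by
      rw [intervalIntegral.integral_mul_deriv_eq_deriv_mul (u := f n) (v := ψ)
        (fun x _ => hdfn x) (fun x _ => hψ x) (hdfc.intervalIntegrable _ _)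
        (hψ'c.intervalIntegrable _ _), hψA, hψB]
      simp
    have hd : ∀ x, deriv (fun x => f n x + t * φ x) x = deriv (f n) x + t * deriv φ x := by
      intro x
      have := ((hdfn x).add ((hφ x).const_mul t)).deriv
      rw [hdφ]; exact this
    unfold usQ
    simp_rw [hd]
    have e1 : ∀ x, ρ x * (deriv (f n) x + t * deriv φ x)^2 = ρ x * deriv (f n) x ^ 2
        + ((2 * t) * (deriv (f n) x * ψ x) + t ^ 2 * (ρ x * deriv φ x ^ 2)) := by
      intro x
      rw [hdφ]
      have := (hρ x).ne'
      field_simp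
      ring
    have e2 : ∀ x, (f n x + t * φ x) ^ 2 * w x = f n x ^ 2 * w x
        + ((2 * t) * (f n x * φ x * w x) + t ^ 2 * (φ x ^ 2 * w x)) := by
      intro x; ring
    simp_rw [e1, e2]
    rw [intervalIntegral.integral_add, intervalIntegral.integral_add,
      intervalIntegral.integral_add, intervalIntegral.integral_add,
      intervalIntegral.integral_const_mul, intervalIntegral.integral_const_mul,
      intervalIntegral.integral_const_mul, intervalIntegral.integral_const_mul, hibp]
    · ring
    all_goals exact (by fun_prop : Continuous _).intervalIntegrable _ _
  set ℓ := -(∫ x in A..B, F x * ψ' x) + l * (∫ x in A..B, F x * φ x * w x) with hℓ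
  have hineq : ∀ t : ℝ, I * usN w p A B (fun x => F x + t * φ x) ^ (2 / p) ≤
      I + 2 * t * ℓ + t ^ 2 * usQ ρ w l A B φ := by
    intro t
    have h1 : Tendsto (fun n => I * usN w p A B (fun x => f n x + t * φ x) ^ (2/p)) atTop
        (𝓝 (I * usN w p A B (fun x => F x + t * φ x) ^ (2/p))) :=
      ((hNlim t).rpow_const (Or.inr (by positivity))).const_mul I
    have h2 : Tendsto (fun n => usQ ρ w l A B (f n)
        + 2 * t * (-(∫ x in A..B, f n x * ψ' x) + l * (∫ x in A..B, f n x * φ x * w x))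
        + t ^ 2 * usQ ρ w l A B φ) atTop (𝓝 (I + 2 * t * ℓ + t ^ 2 * usQ ρ w l A B φ)) := by
      refine (hf4.add (Tendsto.const_mul _ (Tendsto.add (Tendsto.neg ?_)
        (Tendsto.const_mul l ?_)))).add_const _
      · exact us_conv A B M hAB.le (fun x y => y * ψ' x) (by fun_prop) f F hfc hM hF
      · exact us_conv A B M hAB.le (fun x y => y * φ x * w x) (by fun_prop) f F hfc hM hF
    refine le_of_tendsto_of_tendsto' h1 h2 fun n => ?_
    rw [← hQexp]
    exact hIQ _ ((hf1 n).add (contDiff_const.mul hφ1))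
  have hN1 : 1 ≤ usN w p A B F := by
    have := hNlim 0
    simp only [zero_mul, add_zero] at this
    exact ge_of_tendsto' this hf3
  have hIN : I * usN w p A B F ^ (2 / p) = I := by
    apply le_antisymm
    · have := hineq 0
      simpa using this
    · exact le_mul_of_one_le_right hI (one_le_rpow hN1 (by positivity))
  apply us_onevar I (usN w p A B F) _ p ℓ (usQ ρ w l A B φ) (by linarith) hp
  intro t ht
  rw [hIN]
  refine le_trans ?_ (hineq t)
  apply mul_le_mul_of_nonneg_left _ hI
  apply rpow_le_rpow ht _ (by positivity)
  have hFpc : Continuous fun x => F x ^ (p - 1) := hFc.rpow_const (fun _ => Or.inr (by linarith))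
  unfold usN
  rw [← intervalIntegral.integral_const_mul, ← intervalIntegral.integral_const_mul,
    ← intervalIntegral.integral_add]
  · apply intervalIntegral.integral_mono_on hAB.le
    · exact (Continuous.add ((hrc.comp hFc).mul hwc) (by fun_prop)).intervalIntegrable _ _
    · exact ((hrc.comp (by fun_prop : Continuous fun x => F x + t * φ x)).mul
        hwc).intervalIntegrable _ _
    · intro x hx
      have := us_tangent p (F x) (t * φ x) (by linarith) (hF0 x hx)
      rw [abs_of_nonneg (hF0 x hx)]
      calc _ = (F x ^ p + p * F x ^ (p - 1) * (t * φ x)) * w x := by ring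
        _ ≤ _ := mul_le_mul_of_nonneg_right this (hw x).le
  · exact ((hrc.comp hFc).mul hwc).intervalIntegrable _ _
  · exact (by fun_prop : Continuous _).intervalIntegrable _ _

open Set Filter Topology in
lemma us_EL2 (A B p l I M : ℝ) (hAB : A < B) (hp : 2 < p) (ρ w : ℝ → ℝ)
    (hρc : Continuous ρ) (hwc : Continuous w) (hρ : ∀ x, 0 < ρ x) (hw : ∀ x, 0 < w x)
    (hI : 0 ≤ I) (hIQ : ∀ f, ContDiff ℝ 1 f → I * usN w p A B f ^ (2 / p) ≤ usQ ρ w l A B f)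
    (f : ℕ → ℝ → ℝ) (hf1 : ∀ n, ContDiff ℝ 1 (f n)) (hf2 : ∀ n x, 0 ≤ f n x)
    (hf3 : ∀ n, 1 ≤ usN w p A B (f n))
    (hf4 : Tendsto (fun n => usQ ρ w l A B (f n)) atTop (𝓝 I))
    (hM : ∀ n, ∀ x ∈ Icc A B, |f n x| ≤ M) (F : ℝ → ℝ) (hFc : Continuous F)
    (hF : ∀ x ∈ Icc A B, Tendsto (fun n => f n x) atTop (𝓝 (F x))) :
    ∃ u H : ℝ → ℝ, (∀ x ∈ Icc A B, u x = F x) ∧ (∀ x, HasDerivAt u (H x / ρ x) x) ∧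
      (∀ x, HasDerivAt H ((l * F x - I * usN w p A B F ^ (2 / p - 1) * F x ^ (p - 1)) * w x) x) ∧
      H A = 0 ∧ H B = 0 := by
  have EL := us_EL A B p l I M hAB hp ρ w hρc hwc hρ hw hI hIQ f hf1 hf2 hf3 hf4 hM F hFc hF
  have hFpc : Continuous fun x => F x ^ (p - 1) := hFc.rpow_const (fun _ => Or.inr (by linarith))
  set J := I * usN w p A B F ^ (2 / p - 1) with hJ
  let k : ℝ → ℝ := fun x => (l * F x - J * F x ^ (p - 1)) * w x
  have hkc : Continuous k := by fun_prop
  have prim : ∀ g : ℝ → ℝ, Continuous g → ∀ x, HasDerivAt (fun y => ∫ t in A..y, g t) (g x) x :=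
    fun g hg x => intervalIntegral.integral_hasDerivAt_right (hg.intervalIntegrable _ _)
      hg.aestronglyMeasurable.stronglyMeasurableAtFilter hg.continuousAt
  let H : ℝ → ℝ := fun x => ∫ t in A..x, k t
  have hH : ∀ x, HasDerivAt H (k x) x := prim k hkc
  have hHc : Continuous H := continuous_iff_continuousAt.2 fun x => (hH x).continuousAt
  have EL' : ∀ φ ψ ψ' : ℝ → ℝ, (∀ x, HasDerivAt φ (ψ x / ρ x) x) → (∀ x, HasDerivAt ψ (ψ' x) x) →
      Continuous ψ' → ψ A = 0 → ψ B = 0 →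
      -(∫ x in A..B, F x * ψ' x) + ∫ x in A..B, φ x * k x = 0 := by
    intro φ ψ ψ' h1 h2 h3 h4 h5
    have hφc : Continuous φ := continuous_iff_continuousAt.2 fun x => (h1 x).continuousAt
    have := EL φ ψ ψ' h1 h2 h3 h4 h5
    have e : ∫ x in A..B, φ x * k x = l * (∫ x in A..B, F x * φ x * w x)
        - J * ∫ x in A..B, F x ^ (p - 1) * φ x * w x := by
      rw [← intervalIntegral.integral_const_mul, ← intervalIntegral.integral_const_mul,
        ← intervalIntegral.integral_sub]
      · congr 1; ext x; simp only [k]; ring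
      all_goals exact (by fun_prop : Continuous _).intervalIntegrable _ _
    rw [e]; linarith
  have hHA : H A = 0 := by simp [H]
  have hHB : H B = 0 := by
    have := EL' (fun _ => 1) (fun _ => 0) (fun _ => 0) (fun x => by simpa using hasDerivAt_const x 1)
      (fun x => hasDerivAt_const x 0) continuous_const rfl rfl
    simpa [H] using this
  have hHρc : Continuous fun x => H x / ρ x := hHc.div hρc fun x => (hρ x).ne'
  let K : ℝ → ℝ := fun x => ∫ t in A..x, H t / ρ t
  have hK : ∀ x, HasDerivAt K (H x / ρ x) x := prim _ hHρc
  have hKc : Continuous K := continuous_iff_continuousAt.2 fun x => (hK x).continuousAt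
  let μ : ℝ := (∫ t in A..B, (K t - F t)) / (B - A)
  let ψ' : ℝ → ℝ := fun x => K x - F x - μ
  have hψ'c : Continuous ψ' := by fun_prop
  let ψ : ℝ → ℝ := fun x => ∫ t in A..x, ψ' t
  have hψ : ∀ x, HasDerivAt ψ (ψ' x) x := prim _ hψ'c
  have hψc : Continuous ψ := continuous_iff_continuousAt.2 fun x => (hψ x).continuousAt
  have hψA : ψ A = 0 := by simp [ψ]
  have hψB : ψ B = 0 := by
    simp only [ψ, ψ']
    rw [intervalIntegral.integral_sub (f := fun x => K x - F x)
      ((hKc.sub hFc).intervalIntegrable _ _) intervalIntegrable_const]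
    simp only [intervalIntegral.integral_const, smul_eq_mul, μ]
    have : B - A ≠ 0 := by linarith
    field_simp; ring
  have hψρc : Continuous fun x => ψ x / ρ x := hψc.div hρc fun x => (hρ x).ne'
  let φ : ℝ → ℝ := fun x => ∫ t in A..x, ψ t / ρ t
  have hφ : ∀ x, HasDerivAt φ (ψ x / ρ x) x := prim _ hψρc
  have h0 := EL' φ ψ ψ' hφ hψ hψ'c hψA hψB
  have i1 : ∫ x in A..B, φ x * k x = - ∫ x in A..B, ψ x / ρ x * H x := by
    rw [intervalIntegral.integral_mul_deriv_eq_deriv_mul (u := φ) (v := H)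
        (fun x _ => hφ x) (fun x _ => hH x) (hψρc.intervalIntegrable _ _)
        (hkc.intervalIntegrable _ _), hHA, hHB]
    simp
  have i2 : ∫ x in A..B, K x * ψ' x = - ∫ x in A..B, H x / ρ x * ψ x := by
    rw [intervalIntegral.integral_mul_deriv_eq_deriv_mul (u := K) (v := ψ)
        (fun x _ => hK x) (fun x _ => hψ x) (hHρc.intervalIntegrable _ _)
        (hψ'c.intervalIntegrable _ _), hψA, hψB]
    simp
  have i3 : ∫ x in A..B, ψ x / ρ x * H x = ∫ x in A..B, H x / ρ x * ψ x := by
    congr 1; ext x; ring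
  have i4 : ∫ x in A..B, ψ' x = 0 := hψB
  have i5 : ∫ x in A..B, ψ' x ^ 2 = 0 := by
    have : ∀ x, ψ' x ^ 2 = K x * ψ' x - F x * ψ' x - μ * ψ' x := by
      intro x; simp only [ψ']; ring
    simp_rw [this]
    rw [intervalIntegral.integral_sub, intervalIntegral.integral_sub,
      intervalIntegral.integral_const_mul, i4]
    · linarith
    all_goals exact (by fun_prop : Continuous _).intervalIntegrable _ _
  have i6 : ∀ x ∈ Icc A B, ψ' x = 0 := by
    intro x hx
    by_contra hne
    have : 0 < ∫ x in A..B, ψ' x ^ 2 :=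
      intervalIntegral.integral_pos hAB (hψ'c.pow 2).continuousOn (fun y _ => sq_nonneg _)
        ⟨x, hx, by positivity⟩
    linarith
  refine ⟨fun x => K x - μ, H, fun x hx => ?_, fun x => (hK x).sub_const μ, hH, hHA, hHB⟩
  have := i6 x hx
  simp only [ψ'] at this
  show K x - μ = F x
  linarith
open Set Filter Topology in
lemma us_pos (A B : ℝ) (ρ c u H : ℝ → ℝ) (hρc : Continuous ρ) (hcc : Continuous c)
    (hρ : ∀ x, 0 < ρ x) (hu : ∀ x ∈ Icc A B, HasDerivAt u (H x / ρ x) x)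
    (hH : ∀ x ∈ Icc A B, HasDerivAt H (c x * u x) x) (hu0 : ∀ x ∈ Icc A B, 0 ≤ u x)
    (hHA : H A = 0) (hHB : H B = 0) (x0 : ℝ) (hx0 : x0 ∈ Icc A B) (hux0 : u x0 = 0) :
    ∀ x ∈ Icc A B, u x = 0 := by
  have hHx0 : H x0 = 0 := by
    rcases hx0.1.eq_or_lt with h | h
    · rw [← h]; exact hHA
    rcases hx0.2.eq_or_lt with h' | h'
    · rw [h']; exact hHB
    have hmin : IsLocalMin u x0 := by
      filter_upwards [Icc_mem_nhds h h'] with y hy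
      rw [hux0]; exact hu0 y hy
    have := hmin.hasDerivAt_eq_zero (hu x0 hx0)
    have h2 := (hρ x0).ne'
    field_simp at this
    simpa using this
  obtain ⟨C, hC⟩ := (isCompact_Icc (a := A) (b := B)).exists_bound_of_continuousOn
    (f := fun x => 1 / ρ x + c x)
    ((continuous_const.div hρc fun x => (hρ x).ne').add hcc).continuousOn
  have hE : ∀ x ∈ Icc A B, HasDerivAt (fun x => u x ^ 2 + H x ^ 2)
      (2 * u x * H x * (1 / ρ x + c x)) x := by
    intro x hx
    have := ((hu x hx).pow 2).add ((hH x hx).pow 2)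
    refine HasDerivAt.congr_deriv (f := fun x => u x ^ 2 + H x ^ 2) this ?_
    simp; ring
  have hbd : ∀ x ∈ Icc A B, |2 * u x * H x * (1 / ρ x + c x)| ≤ C * (u x ^ 2 + H x ^ 2) := by
    intro x hx
    rw [abs_mul, mul_comm]
    apply mul_le_mul (hC x hx) _ (abs_nonneg _) ((abs_nonneg _).trans (hC x hx))
    rw [abs_le]
    constructor <;> nlinarith [sq_nonneg (u x + H x), sq_nonneg (u x - H x)]
  have hexp : ∀ k x : ℝ, HasDerivAt (fun x => Real.exp (k * x)) (Real.exp (k * x) * k) x := by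
    intro k x
    simpa using ((hasDerivAt_id x).const_mul k).exp
  have hmono : MonotoneOn (fun x => (u x ^ 2 + H x ^ 2) * Real.exp (C * x)) (Icc A B) := by
    apply monotoneOn_of_deriv_nonneg (convex_Icc _ _)
    · exact fun x hx => ((hE x hx).mul (hexp C x)).continuousAt.continuousWithinAt
    · intro x hx
      rw [interior_Icc] at hx
      exact ((hE x (Ioo_subset_Icc_self hx)).mul
        (hexp C x)).differentiableAt.differentiableWithinAt
    · intro x hx
      rw [interior_Icc] at hx
      have hx' := Ioo_subset_Icc_self hx
      have hd : deriv (fun x => (u x ^ 2 + H x ^ 2) * Real.exp (C * x)) x = _ :=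
        ((hE x hx').mul (hexp C x)).deriv
      rw [hd]
      have := (abs_le.1 (hbd x hx')).1
      have he := Real.exp_pos (C * x)
      nlinarith
  have hanti : AntitoneOn (fun x => (u x ^ 2 + H x ^ 2) * Real.exp (-C * x)) (Icc A B) := by
    apply antitoneOn_of_deriv_nonpos (convex_Icc _ _)
    · exact fun x hx => ((hE x hx).mul (hexp (-C) x)).continuousAt.continuousWithinAt
    · intro x hx
      rw [interior_Icc] at hx
      exact ((hE x (Ioo_subset_Icc_self hx)).mul
        (hexp (-C) x)).differentiableAt.differentiableWithinAt
    · intro x hx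
      rw [interior_Icc] at hx
      have hx' := Ioo_subset_Icc_self hx
      have hd : deriv (fun x => (u x ^ 2 + H x ^ 2) * Real.exp (-C * x)) x = _ :=
        ((hE x hx').mul (hexp (-C) x)).deriv
      rw [hd]
      have := (abs_le.1 (hbd x hx')).2
      have he := Real.exp_pos (-C * x)
      nlinarith
  intro x hx
  have hsq : u x ^ 2 + H x ^ 2 ≤ 0 := by
    rcases le_total x x0 with h | h
    · have := hmono hx hx0 h
      simp only [hux0, hHx0] at this
      have he := Real.exp_pos (C * x)
      by_contra hcon
      push Not at hcon
      have := mul_pos hcon he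
      norm_num at *
      linarith
    · have := hanti hx0 hx h
      simp only [hux0, hHx0] at this
      have he := Real.exp_pos (-C * x)
      by_contra hcon
      push Not at hcon
      have := mul_pos hcon he
      norm_num at *
      linarith
  nlinarith [sq_nonneg (u x), sq_nonneg (H x)]
open Set in
lemma us_quad (d p : ℝ) (hd : 0 < d) (hp2 : 2 < p) (hp : p * (d - 2) ≤ 2 * d) (s : ℝ)
    (hs : s = (d + 3 - p) / (d + 2)) (G z : ℝ) :
    0 ≤ (G + (s-1)*z)^2 - 2*((p-1)*(d-1)/(d+2))*(G+(s-1)*z)*z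
      + ((p-2+s)*(1-s)+s*(p-1)*d/(d+2))*z^2 := by
  have h1 : (p-2+s)*(1-s)+s*(p-1)*d/(d+2) - ((p-1)*(d-1)/(d+2))^2
      = (p-1)*d*((d+2)-(p-1)*(d-2))/(d+2)^2 := by
    subst hs; field_simp; ring
  have h2 : 0 ≤ (p-1)*d*((d+2)-(p-1)*(d-2))/(d+2)^2 := by
    apply div_nonneg _ (by positivity)
    apply mul_nonneg
    · apply mul_nonneg <;> linarith
    · nlinarith
  rw [← h1] at h2
  nlinarith [sq_nonneg (G + (s-1)*z - ((p-1)*(d-1)/(d+2))*z), mul_nonneg h2 (sq_nonneg z)]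

open Set in
lemma us_rigid (d p lam a I : ℝ) (hd : 0 < d) (hp2 : 2 < p) (hp : p * (d - 2) ≤ 2 * d)
    (hlam : lam < d) (ha0 : 0 < a) (ha1 : a < 1) (f g G : ℝ → ℝ)
    (hfpos : ∀ x ∈ Icc (-a) a, 0 < f x) (hfc : ContinuousOn f (Icc (-a) a))
    (hgc : ContinuousOn g (Icc (-a) a)) (hg1 : g (-a) = 0) (hg2 : g a = 0)
    (hf' : ∀ x ∈ Ioo (-a) a, HasDerivAt f (g x) x)
    (hg' : ∀ x ∈ Ioo (-a) a, HasDerivAt g (G x) x)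
    (hode : ∀ x ∈ Ioo (-a) a, (1 - x^2) * G x - d * x * g x
      = lam / (p - 2) * f x - I * f x ^ (p - 1)) :
    ∀ x ∈ Ioo (-a) a, g x = 0 := by
  obtain ⟨s, hs⟩ : ∃ s, s = (d + 3 - p) / (d + 2) := ⟨_, rfl⟩
  let P : ℝ → ℝ := fun x => -((1-x^2)^(d/2) * (g x * I * f x ^ (p-1) * f x ^ (2*s-3) * f x
      - lam/(p-2) * g x * f x^2 * f x ^ (2*s-3) - d * x * g x^2 * f x ^ (2*s-3) * f x
      + (p-1)*d/(d+2) * (1-x^2) * g x^3 * f x ^ (2*s-3)))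
  have hnu : ∀ x ∈ Icc (-a) a, 0 < 1 - x^2 := fun x hx => by nlinarith [hx.1, hx.2]
  have hPc : ContinuousOn P (Icc (-a) a) := by
    have e1 : ContinuousOn (fun x => f x ^ (p-1)) (Icc (-a) a) :=
      hfc.rpow_const (fun x hx => Or.inl (hfpos x hx).ne')
    have e2 : ContinuousOn (fun x => f x ^ (2*s-3)) (Icc (-a) a) :=
      hfc.rpow_const (fun x hx => Or.inl (hfpos x hx).ne')
    have e3 : ContinuousOn (fun x : ℝ => (1-x^2) ^ (d/2)) (Icc (-a) a) :=
      ContinuousOn.rpow_const (by fun_prop) (fun x hx => Or.inl (hnu x hx).ne')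
    fun_prop
  let R : ℝ → ℝ := fun x => (1-x^2)^(d/2) * f x ^ (2*s-3) * f x *
    ((1-x^2) * ((G x + (s-1)*(g x^2/f x))^2 - 2*((p-1)*(d-1)/(d+2))*(G x+(s-1)*(g x^2/f x))*(g x^2/f x)
      + ((p-2+s)*(1-s)+s*(p-1)*d/(d+2))*(g x^2/f x)^2) + (d-lam) * g x^2)
  have hP' : ∀ x ∈ Ioo (-a) a, HasDerivAt P (R x) x := by
    intro x hx
    have hx' := Ioo_subset_Icc_self hx
    have hf0 := hfpos x hx'
    have hn := hnu x hx'
    have d1 := hf' x hx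
    have d2 := hg' x hx
    have e1 : HasDerivAt (fun x => f x ^ (p-1)) ((p-1) * f x ^ (p-1) / f x * g x) x := by
      convert d1.rpow_const (p := p-1) (Or.inl hf0.ne') using 1
      rw [rpow_sub_one hf0.ne' (p-1)]; ring
    have e2 : HasDerivAt (fun x => f x ^ (2*s-3)) ((2*s-3) * f x ^ (2*s-3) / f x * g x) x := by
      convert d1.rpow_const (p := 2*s-3) (Or.inl hf0.ne') using 1
      rw [rpow_sub_one hf0.ne' (2*s-3)]; ring
    have d0 : HasDerivAt (fun x : ℝ => 1 - x^2) (-(2*x)) x := by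
      have := ((hasDerivAt_id x).pow 2).const_sub 1
      simpa using this
    have e3 : HasDerivAt (fun x : ℝ => (1-x^2) ^ (d/2)) (-d*x*(1-x^2)^(d/2)/(1-x^2)) x := by
      convert d0.rpow_const (p := d/2) (Or.inl hn.ne') using 1
      rw [rpow_sub_one hn.ne' (d/2)]; ring
    have key := (e3.mul ((((((d2.mul_const I).mul e1).mul e2).mul d1).sub
      (((d2.const_mul (lam/(p-2))).mul (d1.pow 2)).mul e2)).sub
      (((((hasDerivAt_id x).const_mul d).mul (d2.pow 2)).mul e2).mul d1) |>.add
      (((d0.const_mul ((p-1)*d/(d+2))).mul (d2.pow 3)).mul e2))).neg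
    have hh := hode x hx
    have hodeI : I * f x ^ (p-1) = lam / (p - 2) * f x - ((1 - x^2) * G x - d * x * g x) := by
      linarith
    refine HasDerivAt.congr_deriv (f := P) key ?_
    simp only [R, Pi.mul_apply, Pi.pow_apply, Pi.sub_apply, Pi.add_apply, id]
    generalize f x ^ (2*s-3) = U at *
    generalize (1-x^2)^(d/2) = W at *
    generalize f x ^ (p-1) = V at *
    generalize f x = F at *
    generalize g x = g0 at *
    generalize G x = G0 at *
    have hp2' : p - 2 ≠ 0 := by linarith
    have hd2 : d + 2 ≠ 0 := by linarith
    obtain ⟨n, hnn⟩ : ∃ n, n = 1 - x^2 := ⟨_, rfl⟩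
    have hn' : n ≠ 0 := by rw [hnn]; exact hn.ne'
    have hF := hf0.ne'
    obtain ⟨J, hJ⟩ : ∃ J, J = I * V := ⟨_, rfl⟩
    have hl : lam = (J + (n * G0 - d * x * g0)) * (p-2) / F := by
      rw [hJ, hodeI, hnn]; field_simp; ring
    rw [← hnn]
    have hx2 : x^2 = 1 - n := by rw [hnn]; ring
    rw [hl]
    field_simp
    rw [hJ, hnn]
    ring
  have hR0 : ∀ x ∈ Ioo (-a) a, (1-x^2)^(d/2) * f x ^ (2*s-3) * f x * ((d-lam) * g x^2) ≤ R x := by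
    intro x hx
    have hx' := Ioo_subset_Icc_self hx
    have hf0 := hfpos x hx'
    have hn := hnu x hx'
    have hW : 0 < (1-x^2)^(d/2) * f x ^ (2*s-3) * f x := by positivity
    apply mul_le_mul_of_nonneg_left _ hW.le
    have := mul_nonneg hn.le (us_quad d p hd hp2 hp s hs (G x) (g x^2/f x))
    linarith
  have hmono : MonotoneOn P (Icc (-a) a) := by
    apply monotoneOn_of_deriv_nonneg (convex_Icc _ _) hPc
    · rw [interior_Icc]
      exact fun x hx => (hP' x hx).differentiableAt.differentiableWithinAt
    · rw [interior_Icc]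
      intro x hx
      rw [(hP' x hx).deriv]
      refine le_trans ?_ (hR0 x hx)
      have hx' := Ioo_subset_Icc_self hx
      have hf0 := hfpos x hx'
      have hn := hnu x hx'
      have : 0 ≤ d - lam := by linarith
      positivity
  have hPa : P (-a) = 0 := by simp [P, hg1]
  have hPb : P a = 0 := by simp [P, hg2]
  have hP0 : ∀ x ∈ Icc (-a) a, P x = 0 := by
    intro x hx
    apply le_antisymm
    · rw [← hPb]; exact hmono hx ⟨by linarith, le_refl _⟩ hx.2
    · rw [← hPa]; exact hmono ⟨le_refl _, by linarith⟩ hx hx.1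
  intro x hx
  have hx' := Ioo_subset_Icc_self hx
  have hf0 := hfpos x hx'
  have hn := hnu x hx'
  have hRx : R x = 0 := by
    have : P =ᶠ[nhds x] fun _ => 0 := by
      filter_upwards [Ioo_mem_nhds hx.1 hx.2] with y hy using hP0 y (Ioo_subset_Icc_self hy)
    exact ((hP' x hx).congr_of_eventuallyEq this.symm).unique (hasDerivAt_const x 0)
  have h1 := hR0 x hx
  rw [hRx] at h1
  have hW : 0 < (1-x^2)^(d/2) * f x ^ (2*s-3) * f x * (d - lam) := by
    have : 0 < d - lam := by linarith
    positivity
  by_contra hne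
  have : 0 < g x ^ 2 := by positivity
  have := mul_pos hW this
  linarith
open Set Filter Topology in
lemma us_interval (d p lam a : ℝ) (hd : 0 < d) (hp2 : 2 < p) (hp : p * (d - 2) ≤ 2 * d)
    (hlam0 : 0 < lam) (hlam : lam < d) (ha0 : 0 < a) (ha1 : a < 1) (f : ℝ → ℝ)
    (hf : ContDiff ℝ 1 f) :
    lam / (p - 2) * (∫ x in (-a)..a, (1 - x^2) ^ (d/2 - 1)) ^ (1 - 2/p) *
      (∫ x in (-a)..a, |f x| ^ p * (1 - x^2) ^ (d/2 - 1)) ^ (2/p) ≤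
    (∫ x in (-a)..a, (1 - x^2) ^ (d/2) * (deriv f x)^2) +
      lam / (p - 2) * ∫ x in (-a)..a, (f x)^2 * (1 - x^2) ^ (d/2 - 1) := by
  have hAB : -a < a := by linarith
  have hl : 0 < lam / (p - 2) := div_pos hlam0 (by linarith)
  obtain ⟨ν, hν⟩ : ∃ ν : ℝ → ℝ, ν = fun x => max (1 - x^2) (1 - a^2) := ⟨_, rfl⟩
  have hνc : Continuous ν := by rw [hν]; fun_prop
  have hν0 : ∀ x, 0 < ν x := fun x => by
    rw [hν]; exact lt_max_of_lt_right (by nlinarith)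
  have hνe : ∀ x ∈ Icc (-a) a, ν x = 1 - x^2 := fun x hx => by
    rw [hν]; exact max_eq_left (by nlinarith [hx.1, hx.2])
  obtain ⟨ρ, hρd⟩ : ∃ ρ : ℝ → ℝ, ρ = fun x => ν x ^ (d/2) := ⟨_, rfl⟩
  obtain ⟨w, hwd⟩ : ∃ w : ℝ → ℝ, w = fun x => ν x ^ (d/2-1) := ⟨_, rfl⟩
  have hρc : Continuous ρ := by
    rw [hρd]; exact hνc.rpow_const fun x => Or.inl (hν0 x).ne'
  have hwc : Continuous w := by
    rw [hwd]; exact hνc.rpow_const fun x => Or.inl (hν0 x).ne'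
  have hρ : ∀ x, 0 < ρ x := fun x => by rw [hρd]; exact rpow_pos_of_pos (hν0 x) _
  have hw : ∀ x, 0 < w x := fun x => by rw [hwd]; exact rpow_pos_of_pos (hν0 x) _
  have hρe : ∀ x ∈ Icc (-a) a, ρ x = (1 - x^2) ^ (d/2) := fun x hx => by
    rw [hρd]; simp only; rw [hνe x hx]
  have hwe : ∀ x ∈ Icc (-a) a, w x = (1 - x^2) ^ (d/2-1) := fun x hx => by
    rw [hwd]; simp only; rw [hνe x hx]
  obtain ⟨I, hI, hIQ, F', hf1, hf2, hf3, hf4, M, hM, F, hFc, hF⟩ :=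
    us_minlim (-a) a p (lam/(p-2)) hAB hp2 hl ρ w hρc hwc hρ hw
  obtain ⟨u, H, huF, hu, hH, hHA, hHB⟩ := us_EL2 (-a) a p (lam/(p-2)) I M hAB hp2 ρ w hρc hwc hρ hw
    hI hIQ F' hf1 hf2 hf3 hf4 hM F hFc hF
  have hF0 : ∀ x ∈ Icc (-a) a, 0 ≤ F x := fun x hx =>
    ge_of_tendsto' (hF x hx) fun n => hf2 n x
  have hN1 : 1 ≤ usN w p (-a) a F := by
    refine ge_of_tendsto' (us_conv (-a) a M hAB.le (fun x y => |y| ^ p * w x) ?_ F' F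
      (fun n => (hf1 n).continuous) hM hF) hf3
    exact ((continuous_snd.abs).rpow_const (fun _ => Or.inr (by linarith))).mul (by fun_prop)
  set l := lam / (p - 2) with hldef
  set J := I * usN w p (-a) a F ^ (2 / p - 1) with hJ
  have hFp : ∀ x ∈ Icc (-a) a, F x ^ (p - 1) = |F x| ^ (p - 2) * F x := by
    intro x hx
    rw [abs_of_nonneg (hF0 x hx)]
    rcases (hF0 x hx).eq_or_lt with h | h
    · rw [← h, zero_rpow (by linarith), mul_zero]
    · rw [← rpow_add_one h.ne']; congr 1; ring
  have hupos : ∀ x ∈ Icc (-a) a, 0 < u x := by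
    by_contra hcon
    push Not at hcon
    obtain ⟨x0, hx0, hx0'⟩ := hcon
    have hz := us_pos (-a) a ρ (fun x => (l - J * |F x| ^ (p-2)) * w x) u H hρc
      ((continuous_const.sub (continuous_const.mul
        (hFc.abs.rpow_const (fun _ => Or.inr (by linarith))))).mul hwc) hρ (fun x _ => hu x)
      (fun x hx => (hH x).congr_deriv (by rw [hFp x hx, huF x hx]; ring))
      (fun x hx => by rw [huF x hx]; exact hF0 x hx) hHA hHB x0 hx0
      (le_antisymm hx0' (by rw [huF x0 hx0]; exact hF0 x0 hx0))
    have : usN w p (-a) a F = 0 := by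
      unfold usN
      rw [intervalIntegral.integral_congr (g := fun _ => 0)]
      · simp
      · intro x hx
        rw [uIcc_of_le hAB.le] at hx
        simp only
        rw [← huF x hx, hz x hx, abs_zero, zero_rpow (by linarith), zero_mul]
    linarith
  have hg0 : ∀ x ∈ Ioo (-a) a, H x / ρ x = 0 := by
    refine us_rigid d p lam a J hd hp2 hp hlam ha0 ha1 u (fun x => H x / ρ x)
      (fun x => ((l * u x - J * u x ^ (p-1)) + d * x * (H x / ρ x)) / (1 - x^2)) hupos
      (fun x _ => (hu x).continuousAt.continuousWithinAt) ?_ (by simp [hHA]) (by simp [hHB])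
      (fun x _ => hu x) ?_ ?_
    · exact fun x _ => ((hH x).continuousAt.div hρc.continuousAt (hρ x).ne').continuousWithinAt
    · intro x hx
      have hx' := Ioo_subset_Icc_self hx
      have hn : 0 < 1 - x^2 := by nlinarith [hx.1, hx.2]
      have d0 : HasDerivAt (fun x : ℝ => 1 - x^2) (-(2*x)) x := by
        have := ((hasDerivAt_id x).pow 2).const_sub 1
        simpa using this
      have e3 : HasDerivAt (fun x : ℝ => (1-x^2) ^ (d/2)) (-d*x*(1-x^2)^(d/2)/(1-x^2)) x := by
        convert d0.rpow_const (p := d/2) (Or.inl hn.ne') using 1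
        rw [rpow_sub_one hn.ne' (d/2)]; ring
      have e4 : HasDerivAt ρ (-d*x*(1-x^2)^(d/2)/(1-x^2)) x := by
        refine e3.congr_of_eventuallyEq ?_
        filter_upwards [Icc_mem_nhds hx.1 hx.2] with y hy using hρe y hy
      have := (hH x).div e4 (hρ x).ne'
      refine HasDerivAt.congr_deriv this ?_
      rw [huF x hx', hwe x hx', hρe x hx', rpow_sub_one hn.ne']
      have hW : 0 < (1-x^2)^(d/2) := by positivity
      field_simp
      ring
    · intro x hx
      have hn : 0 < 1 - x^2 := by nlinarith [hx.1, hx.2]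
      field_simp
      ring
  have hH0 : ∀ x ∈ Icc (-a) a, H x = 0 := by
    intro x hx
    rcases hx.1.eq_or_lt with h | h
    · rw [← h]; exact hHA
    rcases hx.2.eq_or_lt with h' | h'
    · rw [h']; exact hHB
    have h1 := hg0 x ⟨h, h'⟩
    have h2 := (hρ x).ne'
    rw [div_eq_zero_iff] at h1
    tauto
  have h0mem : (0:ℝ) ∈ Icc (-a) a := ⟨by linarith, ha0.le⟩
  have hconst : ∀ x ∈ Icc (-a) a, u x = u (-a) := by
    apply constant_of_has_deriv_right_zero
    · exact fun x _ => (hu x).continuousAt.continuousWithinAt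
    · intro x hx
      have := hu x
      rw [hH0 x (Ico_subset_Icc_self hx), zero_div] at this
      exact this.hasDerivWithinAt
  have hk := hupos (-a) ⟨le_rfl, hAB.le⟩
  generalize u (-a) = k at hconst hk
  have heq : l * k = J * k ^ (p - 1) := by
    have h1 : H =ᶠ[𝓝 0] fun _ => 0 := by
      filter_upwards [Icc_mem_nhds (by linarith : -a < 0) ha0] with y hy using hH0 y hy
    have h2 := ((hH 0).congr_of_eventuallyEq h1.symm).unique (hasDerivAt_const 0 0)
    rw [← huF 0 h0mem, hconst 0 h0mem] at h2
    have := (hw 0).ne'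
    have h3 := (mul_eq_zero.1 h2).resolve_right this
    linarith
  set m := ∫ x in (-a)..a, w x with hm
  have hmpos : 0 < m := intervalIntegral.intervalIntegral_pos_of_pos
    (hwc.intervalIntegrable _ _) hw hAB
  have hN : usN w p (-a) a F = k ^ p * m := by
    unfold usN
    rw [hm, ← intervalIntegral.integral_const_mul]
    apply intervalIntegral.integral_congr
    intro x hx
    rw [uIcc_of_le hAB.le] at hx
    simp only
    rw [← huF x hx, hconst x hx, abs_of_pos hk]
  have hIeq : I = l * m ^ (1 - 2/p) := by
    rw [hJ, hN, mul_rpow (by positivity) hmpos.le, ← rpow_mul hk.le] at heq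
    have e1 : k ^ (p * (2/p - 1)) * k ^ (p - 1) = k := by
      rw [← rpow_add hk]
      have : p * (2/p - 1) + (p - 1) = 1 := by field_simp; ring
      rw [this, rpow_one]
    have e2 : m ^ (2/p - 1) * m ^ (1 - 2/p) = 1 := by
      rw [← rpow_add hmpos]; simp
    have e3 : l = I * m ^ (2/p - 1) := by
      have : l * k = (I * m ^ (2/p - 1)) * k := by
        rw [heq]; linear_combination (I * m ^ (2/p-1)) * e1
      exact mul_right_cancel₀ hk.ne' this
    rw [e3, mul_assoc, e2, mul_one]
  have hfin := hIQ f hf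
  rw [hIeq] at hfin
  have c1 : m = ∫ x in (-a)..a, (1 - x^2) ^ (d/2 - 1) := by
    apply intervalIntegral.integral_congr
    intro x hx
    rw [uIcc_of_le hAB.le] at hx
    exact hwe x hx
  have c2 : usN w p (-a) a f = ∫ x in (-a)..a, |f x| ^ p * (1 - x^2) ^ (d/2 - 1) := by
    apply intervalIntegral.integral_congr
    intro x hx
    rw [uIcc_of_le hAB.le] at hx
    simp only
    rw [hwe x hx]
  have c3 : usQ ρ w l (-a) a f = (∫ x in (-a)..a, (1 - x^2) ^ (d/2) * (deriv f x)^2) +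
      l * ∫ x in (-a)..a, (f x)^2 * (1 - x^2) ^ (d/2 - 1) := by
    unfold usQ
    congr 1
    · apply intervalIntegral.integral_congr
      intro x hx
      rw [uIcc_of_le hAB.le] at hx
      simp only
      rw [hρe x hx]
    · congr 1
      apply intervalIntegral.integral_congr
      intro x hx
      rw [uIcc_of_le hAB.le] at hx
      simp only
      rw [hwe x hx]
  rw [c1, c2, c3] at hfin
  exact hfin
open Set in
lemma us_Z (d : ℕ) (hd : 1 ≤ d) :
    ∫ x in (-1:ℝ)..1, (1 - x^2) ^ ((d:ℝ)/2 - 1) = Zd d := by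
  obtain ⟨α, hα⟩ : ∃ α : ℝ, α = (d:ℝ)/2 := ⟨_, rfl⟩
  have hd' : (1:ℝ) ≤ d := by exact_mod_cast hd
  have hα0 : 0 < α := by rw [hα]; positivity
  have h1 := ProbabilityTheory.beta_eq_betaIntegralReal α α hα0 hα0
  have h2 : Complex.betaIntegral α α = ((∫ x in (0:ℝ)..1, x ^ (α - 1) * (1 - x) ^ (α - 1) : ℝ) : ℂ) := by
    rw [Complex.betaIntegral, ← intervalIntegral.integral_ofReal]
    apply intervalIntegral.integral_congr
    intro x hx
    rw [uIcc_of_le zero_le_one] at hx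
    simp only
    rw [Complex.ofReal_mul, Complex.ofReal_cpow hx.1, Complex.ofReal_cpow (by linarith [hx.2])]
    push_cast
    rfl
  rw [h2, Complex.ofReal_re] at h1
  have h3 := intervalIntegral.smul_integral_comp_mul_sub (a := 0) (b := 1)
    (fun x : ℝ => (1 - x^2) ^ (α - 1)) 2 1
  norm_num at h3
  rw [← hα, ← h3]
  have h4 : ∫ x in (0:ℝ)..1, (1 - (2*x-1)^2) ^ (α - 1)
      = (4:ℝ) ^ (α - 1) * ∫ x in (0:ℝ)..1, x ^ (α - 1) * (1 - x) ^ (α - 1) := by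
    rw [← intervalIntegral.integral_const_mul]
    apply intervalIntegral.integral_congr
    intro x hx
    rw [uIcc_of_le zero_le_one] at hx
    simp only
    rw [← mul_rpow hx.1 (by linarith [hx.2]),
      ← mul_rpow (by norm_num) (mul_nonneg hx.1 (by linarith [hx.2]))]
    congr 1; ring
  rw [h4, ← h1, ProbabilityTheory.beta, Zd]
  have h5 := Real.Gamma_mul_Gamma_add_half α
  have e1 : ((d:ℝ) + 1)/2 = α + 1/2 := by rw [hα]; ring
  rw [e1, ← hα, ← two_mul]
  have g1 := Real.Gamma_pos_of_pos hα0
  have g2 := Real.Gamma_pos_of_pos (by linarith : 0 < α + 1/2)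
  have g3 := Real.Gamma_pos_of_pos (by linarith : 0 < 2 * α)
  have e2 : (4:ℝ) ^ (α - 1) * 2 * 2 ^ (1 - 2*α) = 1 := by
    have q1 : (4:ℝ) ^ (α - 1) = 2 ^ (2 * (α - 1)) := by
      rw [show (4:ℝ) = 2 ^ (2:ℝ) by norm_num, ← rpow_mul (by norm_num)]
    have q2 : (2:ℝ) ^ (2 * (α - 1)) * 2 = 2 ^ (2 * (α - 1) + 1) :=
      (rpow_add_one (by norm_num) _).symm
    rw [q1, q2, ← rpow_add (by norm_num)]
    have : 2 * (α - 1) + 1 + (1 - 2*α) = 0 := by ring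
    rw [this, rpow_zero]
  generalize Real.Gamma (α + 1/2) = G2 at *
  generalize Real.Gamma (2 * α) = G3 at *
  generalize Real.Gamma α = G1 at *
  generalize (2:ℝ) ^ (1 - 2*α) = P at *
  generalize (4:ℝ) ^ (α - 1) = Q at *
  field_simp
  linear_combination (2 * Q) * h5 + (G3 * √π) * e2

lemma us_Zpos (d : ℕ) (hd : 1 ≤ d) : 0 < Zd d := by
  have hd' : (1:ℝ) ≤ d := by exact_mod_cast hd
  have g1 := Real.Gamma_pos_of_pos (by positivity : 0 < (d:ℝ)/2)
  have g2 := Real.Gamma_pos_of_pos (by positivity : 0 < ((d:ℝ)+1)/2)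
  unfold Zd
  have := Real.pi_pos
  positivity

open Set in
lemma us_integral (d : ℕ) (hd : 1 ≤ d) (h : ℝ → ℝ) :
    ∫ x, h x ∂(nuMeas d) = (∫ x in Ioo (-1:ℝ) 1, h x * (1 - x^2) ^ ((d:ℝ)/2 - 1)) / Zd d := by
  unfold nuMeas
  rw [integral_withDensity_eq_integral_toReal_smul (by fun_prop) (by simp), ← integral_div]
  apply setIntegral_congr_fun measurableSet_Ioo
  intro x hx
  have hn : 0 < 1 - x^2 := by nlinarith [hx.1, hx.2]
  have hZ := us_Zpos d hd
  simp only [smul_eq_mul]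
  rw [ENNReal.toReal_ofReal (by positivity)]
  ring
open Set Filter Topology in
lemma us_full (d p : ℝ) (hd : 0 < d) (hp2 : 2 < p) (hp : p * (d - 2) ≤ 2 * d) (f : ℝ → ℝ)
    (hf : ContDiff ℝ 1 f) (hw : IntegrableOn (fun x : ℝ => (1 - x^2) ^ (d/2 - 1)) (Ioo (-1) 1)) :
    d / (p - 2) * (∫ x in Ioo (-1:ℝ) 1, (1 - x^2) ^ (d/2 - 1)) ^ (1 - 2/p) *
      (∫ x in Ioo (-1:ℝ) 1, |f x| ^ p * (1 - x^2) ^ (d/2 - 1)) ^ (2/p) ≤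
    (∫ x in Ioo (-1:ℝ) 1, (1 - x^2) ^ (d/2) * (deriv f x)^2) +
      d / (p - 2) * ∫ x in Ioo (-1:ℝ) 1, (f x)^2 * (1 - x^2) ^ (d/2 - 1) := by
  have hfc := hf.continuous
  have hdc := hf.continuous_deriv le_rfl
  have step : ∀ a : ℝ, 0 < a → a < 1 →
      d / (p - 2) * (∫ x in (-a)..a, (1 - x^2) ^ (d/2 - 1)) ^ (1 - 2/p) *
      (∫ x in (-a)..a, |f x| ^ p * (1 - x^2) ^ (d/2 - 1)) ^ (2/p) ≤
    (∫ x in (-a)..a, (1 - x^2) ^ (d/2) * (deriv f x)^2) +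
      d / (p - 2) * ∫ x in (-a)..a, (f x)^2 * (1 - x^2) ^ (d/2 - 1) := by
    intro a ha0 ha1
    have key := fun lam h1 h2 => us_interval d p lam a hd hp2 hp h1 h2 ha0 ha1 f hf
    generalize (∫ x in (-a)..a, (1 - x^2) ^ (d/2 - 1)) ^ (1 - 2/p) = X at *
    generalize (∫ x in (-a)..a, |f x| ^ p * (1 - x^2) ^ (d/2 - 1)) ^ (2/p) = Y at *
    generalize (∫ x in (-a)..a, (1 - x^2) ^ (d/2) * (deriv f x)^2) = D at *
    generalize (∫ x in (-a)..a, (f x)^2 * (1 - x^2) ^ (d/2 - 1)) = W at *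
    have c1 : Continuous fun lam : ℝ => lam / (p - 2) * X * Y := by fun_prop
    have c2 : Continuous fun lam : ℝ => D + lam / (p - 2) * W := by fun_prop
    refine le_of_tendsto_of_tendsto (b := 𝓝[<] d) ((c1.tendsto d).mono_left nhdsWithin_le_nhds)
      ((c2.tendsto d).mono_left nhdsWithin_le_nhds) ?_
    filter_upwards [Ioo_mem_nhdsLT hd] with lam hlam using key lam hlam.1 hlam.2
  have hb : Tendsto (fun n : ℕ => 1 - 1 / ((n:ℝ) + 2)) atTop (𝓝 1) := by
    have h := (tendsto_one_div_add_atTop_nhds_zero_nat (𝕜 := ℝ)).comp (tendsto_add_atTop_nat 1)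
    have h2 := h.const_sub 1
    simp only [sub_zero] at h2
    refine h2.congr fun n => ?_
    simp only [Function.comp]
    push_cast
    ring_nf
  have ha := hb.neg
  have hbpos : ∀ n : ℕ, 0 < 1 - 1 / ((n:ℝ) + 2) ∧ 1 - 1 / ((n:ℝ) + 2) < 1 := by
    intro n
    have : (0:ℝ) < 1 / ((n:ℝ) + 2) := by positivity
    have h2 : 1 / ((n:ℝ) + 2) < 1 := by
      rw [div_lt_one (by positivity)]
      have : (0:ℝ) ≤ n := by positivity
      linarith
    constructor <;> linarith
  have conv : ∀ h : ℝ → ℝ, IntegrableOn h (Ioo (-1) 1) →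
      Tendsto (fun n : ℕ => ∫ x in (-(1 - 1 / ((n:ℝ) + 2)))..(1 - 1 / ((n:ℝ) + 2)), h x) atTop
        (𝓝 (∫ x in Ioo (-1:ℝ) 1, h x)) := by
    intro h hh
    have hc := (aecover_Ioo_of_Ioc (μ := volume) ha hb).integral_tendsto_of_countably_generated hh
    refine hc.congr fun n => ?_
    have hn := hbpos n
    rw [intervalIntegral.integral_of_le (by linarith), Measure.restrict_restrict measurableSet_Ioc]
    congr 2
    apply inter_eq_left.2
    intro x hx
    exact ⟨by linarith [hx.1], by linarith [hx.2]⟩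
  have hwI : IntegrableOn (fun x : ℝ => (1 - x^2) ^ (d/2 - 1)) (Icc (-1) 1) := by
    rwa [integrableOn_Icc_iff_integrableOn_Ioo]
  have hint : ∀ h : ℝ → ℝ, Continuous h →
      IntegrableOn (fun x : ℝ => h x * (1 - x^2) ^ (d/2 - 1)) (Ioo (-1) 1) := by
    intro h hh
    exact (IntegrableOn.continuousOn_mul hh.continuousOn hwI isCompact_Icc).mono_set
      Ioo_subset_Icc_self
  have t1 := conv _ hw
  have t2 := conv _ (hint _ (hfc.abs.rpow_const (fun _ => Or.inr (by linarith : 0 ≤ p))))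
  have t3 := conv _ (hint _ (hfc.pow 2))
  have t4 := conv (fun x => (1 - x^2) ^ (d/2) * (deriv f x)^2) (by
    refine (Continuous.integrableOn_Icc (a := -1) (b := 1) ?_).mono_set Ioo_subset_Icc_self
    exact ((by fun_prop : Continuous fun x : ℝ => 1 - x^2).rpow_const
      (fun _ => Or.inr (by positivity))).mul (hdc.pow 2))
  refine le_of_tendsto_of_tendsto' (((t1.rpow_const (p := 1 - 2/p) (Or.inr ?_)).const_mul _).mul
    (t2.rpow_const (p := 2/p) (Or.inr (by positivity)))) (t4.add (t3.const_mul (d/(p-2))))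
    (fun n => step _ (hbpos n).1 (hbpos n).2)
  rw [sub_nonneg, div_le_one (by linarith)]
  linarith

open Set in
lemma us_extend (f : ℝ → ℝ) (hf : ContDiffOn ℝ 1 f (Icc (-1 : ℝ) 1)) :
    ∃ g : ℝ → ℝ, ContDiff ℝ 1 g ∧ ∀ x ∈ Ioo (-1:ℝ) 1, g x = f x ∧ deriv g x = deriv f x := by
  have hc : ContinuousOn (derivWithin f (Icc (-1:ℝ) 1)) (Icc (-1:ℝ) 1) :=
    hf.continuousOn_derivWithin (uniqueDiffOn_Icc (by norm_num)) le_rfl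
  have h11 : (-1:ℝ) ≤ 1 := by norm_num
  let e : ℝ → ℝ := IccExtend h11 ((Icc (-1:ℝ) 1).restrict (derivWithin f (Icc (-1:ℝ) 1)))
  have hec : Continuous e := (continuousOn_iff_continuous_restrict.1 hc).Icc_extend'
  have hfd : ∀ x ∈ Ioo (-1:ℝ) 1, HasDerivAt f (e x) x := by
    intro x hx
    have hx' := Ioo_subset_Icc_self hx
    have h1 : DifferentiableAt ℝ f x :=
      (hf.differentiableOn one_ne_zero).differentiableAt (Icc_mem_nhds hx.1 hx.2)
    have : e x = deriv f x := by
      simp only [e]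
      rw [IccExtend_of_mem _ _ hx']
      exact derivWithin_of_mem_nhds (Icc_mem_nhds hx.1 hx.2)
    rw [this]; exact h1.hasDerivAt
  let g : ℝ → ℝ := fun x => f 0 + ∫ t in (0:ℝ)..x, e t
  have hg : ∀ x, HasDerivAt g (e x) x := fun x =>
    (intervalIntegral.integral_hasDerivAt_right (hec.intervalIntegrable _ _)
      hec.aestronglyMeasurable.stronglyMeasurableAtFilter hec.continuousAt).const_add _
  refine ⟨g, ?_, ?_⟩
  · rw [contDiff_one_iff_deriv]
    refine ⟨fun x => (hg x).differentiableAt, ?_⟩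
    rw [funext fun x => (hg x).deriv]; exact hec
  · intro x hx
    refine ⟨?_, by rw [(hg x).deriv, (hfd x hx).deriv]⟩
    simp only [g]
    rw [intervalIntegral.integral_eq_sub_of_hasDerivAt (f := f) _ (hec.intervalIntegrable _ _)]
    · ring
    · intro t ht
      apply hfd
      have h0 : (0:ℝ) ∈ Ioo (-1:ℝ) 1 := by constructor <;> norm_num
      exact (ordConnected_Ioo.uIcc_subset h0 hx) ht

theorem ultraspherical_supercritical (d : ℕ) (hd : 1 ≤ d) (p : ℝ) (hp2 : 2 < p)
    (hp : 3 ≤ d → p ≤ 2 * d / ((d : ℝ) - 2))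
    (f : ℝ → ℝ) (hf : ContDiffOn ℝ 1 f (Set.Icc (-1 : ℝ) 1)) :
    ∫ x, (deriv f x) ^ 2 * (1 - x ^ 2) ∂(nuMeas d) ≥
      d * (((∫ x, |f x| ^ p ∂(nuMeas d)) ^ (2 / p) -
        ∫ x, |f x| ^ (2 : ℝ) ∂(nuMeas d)) / (p - 2)) := by
  have hd' : (1:ℝ) ≤ d := by exact_mod_cast hd
  have hpd : p * ((d:ℝ) - 2) ≤ 2 * d := by
    by_cases h3 : 3 ≤ d
    · have h3' : (3:ℝ) ≤ d := by exact_mod_cast h3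
      have := hp h3
      rwa [le_div_iff₀ (by linarith)] at this
    · have h2 : (d:ℝ) ≤ 2 := by exact_mod_cast (by omega : d ≤ 2)
      nlinarith
  have hZ := us_Zpos d hd
  have hZi : ∫ x in Set.Ioo (-1:ℝ) 1, (1 - x^2) ^ ((d:ℝ)/2 - 1) = Zd d := by
    rw [← us_Z d hd, intervalIntegral.integral_of_le (by norm_num), integral_Ioc_eq_integral_Ioo]
  have hwI : IntegrableOn (fun x : ℝ => (1 - x^2) ^ ((d:ℝ)/2 - 1)) (Set.Ioo (-1) 1) := by
    by_contra hcon
    rw [integral_undef hcon] at hZi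
    linarith
  obtain ⟨g, hg, hgf⟩ := us_extend f hf
  have key := us_full d p (by linarith) hp2 hpd g hg hwI
  rw [hZi] at key
  have e1 : ∫ x in Set.Ioo (-1:ℝ) 1, |g x| ^ p * (1 - x^2) ^ ((d:ℝ)/2 - 1)
      = ∫ x in Set.Ioo (-1:ℝ) 1, |f x| ^ p * (1 - x^2) ^ ((d:ℝ)/2 - 1) :=
    setIntegral_congr_fun measurableSet_Ioo fun x hx => by simp only [(hgf x hx).1]
  have e2 : ∫ x in Set.Ioo (-1:ℝ) 1, (g x)^2 * (1 - x^2) ^ ((d:ℝ)/2 - 1)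
      = ∫ x in Set.Ioo (-1:ℝ) 1, |f x| ^ (2:ℝ) * (1 - x^2) ^ ((d:ℝ)/2 - 1) :=
    setIntegral_congr_fun measurableSet_Ioo fun x hx => by
      simp only [(hgf x hx).1]; rw [rpow_two, sq_abs]
  have e3 : ∫ x in Set.Ioo (-1:ℝ) 1, (1 - x^2) ^ ((d:ℝ)/2) * (deriv g x)^2
      = ∫ x in Set.Ioo (-1:ℝ) 1, (deriv f x)^2 * (1 - x^2) * (1 - x^2) ^ ((d:ℝ)/2 - 1) :=
    setIntegral_congr_fun measurableSet_Ioo fun x hx => by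
      have hn : 0 < 1 - x^2 := by nlinarith [hx.1, hx.2]
      simp only [(hgf x hx).2]; rw [rpow_sub_one hn.ne']; field_simp
  rw [e1, e2, e3] at key
  rw [us_integral d hd, us_integral d hd, us_integral d hd]
  have hN0 : 0 ≤ ∫ x in Set.Ioo (-1:ℝ) 1, |f x| ^ p * (1 - x^2) ^ ((d:ℝ)/2 - 1) := by
    apply setIntegral_nonneg measurableSet_Ioo
    intro x hx
    have hn : 0 < 1 - x^2 := by nlinarith [hx.1, hx.2]
    positivity
  rw [div_rpow hN0 hZ.le]
  have hZ2 : Zd d ^ (1 - 2/p) = Zd d / Zd d ^ (2/p) := by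
    rw [rpow_sub hZ, rpow_one]
  rw [hZ2] at key
  have hZp : 0 < Zd d ^ (2/p) := by positivity
  generalize (∫ x in Set.Ioo (-1:ℝ) 1, |f x| ^ p * (1 - x^2) ^ ((d:ℝ)/2 - 1)) ^ (2/p) = X at *
  generalize (∫ x in Set.Ioo (-1:ℝ) 1, |f x| ^ (2:ℝ) * (1 - x^2) ^ ((d:ℝ)/2 - 1)) = Y at *
  generalize (∫ x in Set.Ioo (-1:ℝ) 1, (deriv f x)^2 * (1 - x^2) * (1 - x^2) ^ ((d:ℝ)/2 - 1)) = D at *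
  have hp0 : p - 2 ≠ 0 := by linarith
  rw [ge_iff_le, le_div_iff₀ hZ]
  calc _ = (d:ℝ) / (p - 2) * (Zd d / Zd d ^ (2/p)) * X - d / (p-2) * Y := by
        field_simp
    _ ≤ D := by linarith
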